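/- arXiv:2208.04850 — 2 statements merged into one kernel-verified Lean document; each statement's English description precedes it below -/
import Mathlib

section
/- Let d ≥ 1, let w : ℝ × ℝ^d → ℝ^d be continuously differentiable with bounded spatial derivative, and let Φ : ℝ × ℝ^d → ℝ^d be a flow of w, i.e. Φ(0,x) = x and ∂_t Φ(t,x) = w(t,Φ(t,x)) for all (t,x). Assume each Φ(t,·) is injective and continuously differentiable, the spatial Jacobian matrix DΦ(t,x) is continuous in (t,x), satisfies det DΦ(t,x) > 0, and for each x the map t ↦ DΦ(t,x) is differentiable with ∂_t DΦ(t,x) = D_x w(t,Φ(t,x)) · DΦ(t,x). Let Ω₀ ⊆ ℝ^d be a bounded measurable set and set Ω(t) := Φ(t,·) '' Ω₀. Then for every g : ℝ × ℝ^d → ℝ of class C¹ with g, ∂_t g and the spatial gradient ∇g bounded, the function t ↦ ∫_{Ω(t)} g(t,y) dy is differentiable and (d/dt) ∫_{Ω(t)} g(t,y) dy = ∫_{Ω(t)} [ ∂_t g(t,y) + w(t,y)·∇g(t,y) + g(t,y) (div_y w)(t,y) ] dy. -/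
open MeasureTheory RealInnerProductSpace

lemma det_diff {E : Type*} [NormedAddCommGroup E] [NormedSpace ℝ E] [FiniteDimensional ℝ E] :
    Differentiable ℝ (fun L : E →L[ℝ] E => L.det) := by
  have h : (fun L : E →L[ℝ] E => L.det) = fun L : E →L[ℝ] E =>
     (LinearMap.toMatrix (Module.finBasis ℝ E) (Module.finBasis ℝ E) L.toLinearMap).det := by
    ext L
    rw [LinearMap.det_toMatrix]
  rw [h]
  simp only [Matrix.det_apply]
  refine Differentiable.fun_sum fun σ _ => ?_
  refine Differentiable.const_smul ?_ _
  refine ContDiff.differentiable (n := 1) ?_ one_ne_zero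
  refine contDiff_prod fun i _ => ?_
  let ℓ : (E →L[ℝ] E) →ₗ[ℝ] ℝ :=
    { toFun := fun L => LinearMap.toMatrix (Module.finBasis ℝ E) (Module.finBasis ℝ E) L.toLinearMap (σ i) i
      map_add' := by intro a b; simp
      map_smul' := by intro a b; simp }
  exact (LinearMap.toContinuousLinearMap ℓ).contDiff

lemma det_one_add_line {E : Type*} [NormedAddCommGroup E] [NormedSpace ℝ E] [FiniteDimensional ℝ E]
    (B : E →L[ℝ] E) :
    HasDerivAt (fun r : ℝ => (1 + r • B).det) (LinearMap.trace ℝ E B.toLinearMap) 0 := by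
  have h : (fun r : ℝ => (1 + r • B).det) = fun r : ℝ =>
     (1 + r • (LinearMap.toMatrix (Module.finBasis ℝ E) (Module.finBasis ℝ E) B.toLinearMap)).det := by
    ext r
    rw [← LinearMap.toMatrix_one (Module.finBasis ℝ E), ← map_smul, ← map_add, LinearMap.det_toMatrix]; rfl
  rw [h, LinearMap.trace_eq_matrix_trace ℝ (Module.finBasis ℝ E)]
  simp only [← Matrix.derivative_det_one_add_X_smul]
  have := Polynomial.hasDerivAt (Matrix.det (1 + (Polynomial.X : Polynomial ℝ) • (LinearMap.toMatrix (Module.finBasis ℝ E) (Module.finBasis ℝ E) B.toLinearMap).map Polynomial.C)) 0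
  convert! this using 1
  ext r
  rw [eval_det]
  simp [← Matrix.smul_eq_mul_diagonal]
  

lemma jacobi {E : Type*} [NormedAddCommGroup E] [NormedSpace ℝ E] [FiniteDimensional ℝ E]
    (A : ℝ → E →L[ℝ] E) (B : E →L[ℝ] E) (t : ℝ) (hA : HasDerivAt A (B.comp (A t)) t) :
    HasDerivAt (fun s => (A s).det) ((A t).det * LinearMap.trace ℝ E B.toLinearMap) t := by
  have h1 := (det_diff (A t)).hasFDerivAt.comp_hasDerivAt t hA
  have h2 : HasDerivAt (fun r : ℝ => A t + r • B.comp (A t)) (B.comp (A t)) 0 := by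
    simpa using ((hasDerivAt_id (0:ℝ)).smul_const (B.comp (A t))).const_add (A t)
  have h3 : HasDerivAt (fun r : ℝ => (A t + r • B.comp (A t)).det)
      (fderiv ℝ (fun L : E →L[ℝ] E => L.det) (A t) (B.comp (A t))) 0 := by
    have := (det_diff (A t)).hasFDerivAt
    refine HasFDerivAt.comp_hasDerivAt (l := fun L : E →L[ℝ] E => L.det) 0 ?_ h2
    simpa using this
  have h4 : (fun r : ℝ => (A t + r • B.comp (A t)).det) = fun r : ℝ => (A t).det * (1 + r • B).det := by
    ext r
    have : A t + r • B.comp (A t) = (1 + r • B).comp (A t) := by ext; simp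
    rw [this, mul_comm]
    exact LinearMap.det_comp _ _
  rw [h4] at h3
  rw [((det_one_add_line B).const_mul _).unique h3]
  exact h1

lemma flow_cont {E : Type*} [NormedAddCommGroup E] [NormedSpace ℝ E] [FiniteDimensional ℝ E]
    (Φ : ℝ → E → E) (DΦ : ℝ → E → E →L[ℝ] E)
    (hc : ∀ x, Continuous (fun s => Φ s x))
    (hDΦ : ∀ t x, HasFDerivAt (Φ t) (DΦ t x) x)
    (hDΦcont : Continuous (fun p : ℝ × E => DΦ p.1 p.2)) :
    Continuous (fun p : ℝ × E => Φ p.1 p.2) := by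
  have : ProperSpace E := FiniteDimensional.proper ℝ E
  rw [continuous_iff_continuousAt]
  rintro ⟨t, x⟩
  have hK : IsCompact (Metric.closedBall t 1 ×ˢ Metric.closedBall x 1) :=
    (isCompact_closedBall t 1).prod (isCompact_closedBall x 1)
  obtain ⟨C, hC⟩ := hK.exists_bound_of_continuousOn hDΦcont.continuousOn
  have hcon : ContinuousOn (fun p : ℝ × E => Φ p.1 p.2)
      (Metric.closedBall t 1 ×ˢ Metric.closedBall x 1) := by
    refine continuousOn_prod_of_continuousOn_lipschitzOnWith' _ C.toNNReal ?_ ?_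
    · intro a ha
      refine (convex_closedBall x 1).lipschitzOnWith_of_nnnorm_hasFDerivWithin_le
        (fun y _ => (hDΦ a y).hasFDerivWithinAt) fun y hy => ?_
      rw [← NNReal.coe_le_coe, coe_nnnorm]
      exact (hC (a, y) ⟨ha, hy⟩).trans (Real.le_coe_toNNReal C)
    · intro b _
      exact (hc b).continuousOn
  exact hcon.continuousAt (prod_mem_nhds (Metric.closedBall_mem_nhds t one_pos)
    (Metric.closedBall_mem_nhds x one_pos))

/-- **Reynolds transport theorem.** If `Φ` is a flow of a `C¹` velocity field `w` with
bounded spatial derivative, each `Φ t` is an injective `C¹` map with spatial Jacobian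
`DΦ t x` continuous in `(t,x)`, of positive determinant, and satisfying the variational
equation `∂ₜ DΦ = D_x w (t, Φ) ∘ DΦ`, and `Ω₀` is a bounded measurable set transported to
`Ω(t) = Φ t '' Ω₀`, then for every `C¹` function `g` with `g`, `∂ₜ g` and `∇g` bounded,
`t ↦ ∫_{Ω(t)} g (t, y) dy` is differentiable with derivative
`∫_{Ω(t)} (∂ₜ g + w·∇g + g div w)`. -/
theorem reynolds_transport_theorem (d : ℕ) (hd : 1 ≤ d)
    (w : ℝ × EuclideanSpace ℝ (Fin d) → EuclideanSpace ℝ (Fin d))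
    (hw : ContDiff ℝ 1 w)
    (Cw : ℝ) (hwbdd : ∀ (t : ℝ) (y : EuclideanSpace ℝ (Fin d)),
      ‖fderiv ℝ (fun z => w (t, z)) y‖ ≤ Cw)
    (Φ : ℝ → EuclideanSpace ℝ (Fin d) → EuclideanSpace ℝ (Fin d))
    (hΦ0 : ∀ x, Φ 0 x = x)
    (hΦ' : ∀ t x, HasDerivAt (fun s => Φ s x) (w (t, Φ t x)) t)
    (hΦinj : ∀ t, Function.Injective (Φ t))
    (hΦreg : ∀ t, ContDiff ℝ 1 (Φ t))
    (DΦ : ℝ → EuclideanSpace ℝ (Fin d) →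
      (EuclideanSpace ℝ (Fin d) →L[ℝ] EuclideanSpace ℝ (Fin d)))
    (hDΦ : ∀ t x, HasFDerivAt (Φ t) (DΦ t x) x)
    (hDΦcont : Continuous (fun p : ℝ × EuclideanSpace ℝ (Fin d) => DΦ p.1 p.2))
    (hdet : ∀ t x, 0 < (DΦ t x).det)
    (hDΦ' : ∀ t x, HasDerivAt (fun s => DΦ s x)
      ((fderiv ℝ (fun z => w (t, z)) (Φ t x)).comp (DΦ t x)) t)
    (Ω₀ : Set (EuclideanSpace ℝ (Fin d)))
    (hΩ₀meas : MeasurableSet Ω₀) (hΩ₀bdd : Bornology.IsBounded Ω₀)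
    (g : ℝ × EuclideanSpace ℝ (Fin d) → ℝ)
    (hg : ContDiff ℝ 1 g)
    (Cg : ℝ)
    (hgbdd : ∀ p : ℝ × EuclideanSpace ℝ (Fin d),
      |g p| ≤ Cg ∧ |deriv (fun s => g (s, p.2)) p.1| ≤ Cg ∧
        ‖gradient (fun z => g (p.1, z)) p.2‖ ≤ Cg) :
    ∀ t : ℝ, HasDerivAt (fun s => ∫ y in Φ s '' Ω₀, g (s, y))
      (∫ y in Φ t '' Ω₀,
        (deriv (fun s => g (s, y)) t
          + ⟪w (t, y), gradient (fun z => g (t, z)) y⟫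
          + g (t, y) * LinearMap.trace ℝ (EuclideanSpace ℝ (Fin d))
              (fderiv ℝ (fun z => w (t, z)) y).toLinearMap)) t := by
  intro t
  have hgd : ∀ p, HasFDerivAt g (fderiv ℝ g p) p := fun p =>
    (hg.differentiable one_ne_zero p).hasFDerivAt
  have hwd : ∀ p, HasFDerivAt w (fderiv ℝ w p) p := fun p =>
    (hw.differentiable one_ne_zero p).hasFDerivAt
  have hgt : ∀ s y, deriv (fun r => g (r, y)) s = fderiv ℝ g (s, y) (1, 0) := by
    intro s y
    exact ((hgd (s, y)).comp_hasDerivAt s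
      ((hasDerivAt_id s).prodMk (hasDerivAt_const s y))).deriv
  have hgx : ∀ s y v, ⟪v, gradient (fun z => g (s, z)) y⟫ = fderiv ℝ g (s, y) (0, v) := by
    intro s y v
    have h : HasFDerivAt (fun z => g (s, z)) _ y :=
      (hgd (s, y)).comp y (hasFDerivAt_prodMk_right s y)
    rw [real_inner_comm, gradient, InnerProductSpace.toDual_symm_apply, h.fderiv]
    simp
  have hwx : ∀ s y, fderiv ℝ (fun z => w (s, z)) y
      = (fderiv ℝ w (s, y)).comp (ContinuousLinearMap.inr ℝ ℝ _) := by
    intro s y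
    exact ((hwd (s, y)).comp y (hasFDerivAt_prodMk_right s y)).fderiv
  have hΦc : Continuous (fun p : ℝ × EuclideanSpace ℝ (Fin d) => Φ p.1 p.2) :=
    flow_cont Φ DΦ (fun x => continuous_iff_continuousAt.2 fun s => (hΦ' s x).continuousAt)
      hDΦ hDΦcont
  have hdetc : Continuous (fun p : ℝ × EuclideanSpace ℝ (Fin d) => (DΦ p.1 p.2).det) :=
    ContinuousLinearMap.continuous_det.comp hDΦcont
  have hgc := hg.continuous
  have hwc := hw.continuous
  have hg'c : Continuous (fderiv ℝ g) := hg.continuous_fderiv one_ne_zero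
  have hw'c : Continuous (fderiv ℝ w) := hw.continuous_fderiv one_ne_zero
  have htr : Continuous (fun L : EuclideanSpace ℝ (Fin d) →L[ℝ] EuclideanSpace ℝ (Fin d) =>
      LinearMap.trace ℝ (EuclideanSpace ℝ (Fin d)) L.toLinearMap) :=
    LinearMap.continuous_of_finiteDimensional
      ((LinearMap.trace ℝ (EuclideanSpace ℝ (Fin d))).comp (ContinuousLinearMap.coeLM ℝ))
  let G : ℝ → EuclideanSpace ℝ (Fin d) → ℝ := fun s y =>
    deriv (fun s => g (s, y)) s
          + ⟪w (s, y), gradient (fun z => g (s, z)) y⟫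
          + g (s, y) * LinearMap.trace ℝ (EuclideanSpace ℝ (Fin d))
              (fderiv ℝ (fun z => w (s, z)) y).toLinearMap
  have hGc : Continuous (fun p : ℝ × EuclideanSpace ℝ (Fin d) => G p.1 p.2) := by
    simp only [G, hgt, hgx, hwx]
    refine ((hg'c.clm_apply continuous_const).add
      (hg'c.clm_apply (continuous_const.prodMk hwc))).add (hgc.mul (htr.comp ?_))
    exact hw'c.clm_comp continuous_const
  have hcv : ∀ (s : ℝ) (f : EuclideanSpace ℝ (Fin d) → ℝ),
      ∫ y in Φ s '' Ω₀, f y = ∫ x in Ω₀, (DΦ s x).det * f (Φ s x) := by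
    intro s f
    rw [integral_image_eq_integral_abs_det_fderiv_smul volume hΩ₀meas
      (fun x _ => (hDΦ s x).hasFDerivWithinAt) (hΦinj s).injOn]
    simp only [abs_of_pos (hdet s _), smul_eq_mul]
  have hpair : Continuous (fun p : ℝ × EuclideanSpace ℝ (Fin d) => (p.1, Φ p.1 p.2)) :=
    continuous_fst.prodMk hΦc
  have hFc : Continuous (fun p : ℝ × EuclideanSpace ℝ (Fin d) =>
      (DΦ p.1 p.2).det * g (p.1, Φ p.1 p.2)) := hdetc.mul (hgc.comp hpair)
  have hF'c : Continuous (fun p : ℝ × EuclideanSpace ℝ (Fin d) =>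
      (DΦ p.1 p.2).det * G p.1 (Φ p.1 p.2)) := hdetc.mul (hGc.comp hpair)
  have hder : ∀ s x, HasDerivAt (fun r => (DΦ r x).det * g (r, Φ r x))
      ((DΦ s x).det * G s (Φ s x)) s := by
    intro s x
    have h1 := jacobi (fun r => DΦ r x) _ s (hDΦ' s x)
    have h2 : HasDerivAt (fun r => g (r, Φ r x)) _ s :=
      (hgd (s, Φ s x)).comp_hasDerivAt s ((hasDerivAt_id s).prodMk (hΦ' s x))
    refine (h1.mul h2).congr_deriv ?_
    have : ((1 : ℝ), w (s, Φ s x)) = (1, 0) + (0, w (s, Φ s x)) := by simp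
    rw [this, map_add]
    simp only [G, hgt, hgx]
    ring
  simp only [hcv]
  have hcl : IsCompact (closure Ω₀) := hΩ₀bdd.isCompact_closure
  obtain ⟨C, hC⟩ := ((isCompact_closedBall t 1).prod hcl).exists_bound_of_continuousOn
    hF'c.continuousOn
  have hfin : volume Ω₀ ≠ ⊤ := hΩ₀bdd.measure_lt_top.ne
  refine (hasDerivAt_integral_of_dominated_loc_of_deriv_le
    (F' := fun s x => (DΦ s x).det * G s (Φ s x)) (bound := fun _ => C)
    (Metric.closedBall_mem_nhds t one_pos) ?_ ?_ ?_ ?_ ?_ ?_).2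
  · exact Filter.Eventually.of_forall fun s =>
      (hFc.comp (Continuous.prodMk_right s)).aestronglyMeasurable
  · exact ((hFc.comp (Continuous.prodMk_right t)).continuousOn.integrableOn_compact hcl).mono_set
      subset_closure
  · exact (hF'c.comp (Continuous.prodMk_right t)).aestronglyMeasurable
  · exact (ae_restrict_mem hΩ₀meas).mono fun x hx s hs => hC (s, x) ⟨hs, subset_closure hx⟩
  · exact integrableOn_const hfin
  · exact Filter.Eventually.of_forall fun x s _ => hder s x
end

section
/- Let d ≥ 1, T > 0, let w : ℝ × ℝ^d → ℝ^d be continuously differentiable and let Φ : ℝ × ℝ^d → ℝ^d be a flow of w (Φ(0,x) = x and ∂_t Φ(t,x) = w(t,Φ(t,x))) whose spatial Jacobian matrix DΦ(t,x) is continuous in (t,x) and differentiable in t with ∂_t DΦ(t,x) = D_x w(t,Φ(t,x)) · DΦ(t,x). Assume there are constants C_w ≥ 0 and 0 < m₁ ≤ m₂ such that |div_y w(t,y)| ≤ C_w for all (t,y) and m₁ ≤ det DΦ(t,x) ≤ m₂ for all t ∈ [0,T] and x. Let Ω₀ ⊆ ℝ^d be measurable and u₀, v₀ ∈ L²(Ω₀).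 Then the function t ↦ ∫_{Ω₀} u₀(x) v₀(x) det DΦ(t,x) dx is differentiable on [0,T] with derivative ∫_{Ω₀} u₀(x) v₀(x) (div w)(t,Φ(t,x)) det DΦ(t,x) dx, and this derivative satisfies the uniform bound |(d/dt) ∫_{Ω₀} u₀ v₀ det DΦ(t,·)| ≤ C_w m₂ ‖u₀‖_{L²(Ω₀)} ‖v₀‖_{L²(Ω₀)}. -/
open MeasureTheory

lemma aux_matrix_det {n : Type*} [Fintype n] [DecidableEq n] (M : ℝ → Matrix n n ℝ)
    (B : Matrix n n ℝ) (t : ℝ)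
    (h : ∀ i j, HasDerivAt (fun s => M s i j) ((B * M t) i j) t) :
    HasDerivAt (fun s => (M s).det) (B.trace * (M t).det) t := by
  have hc : Continuous (fun m : n → n → ℝ => Matrix.det (Matrix.of m)) := by
    apply Continuous.matrix_det
    exact continuous_id
  let f : ContinuousMultilinearMap ℝ (fun _ : n => n → ℝ) ℝ :=
    { toMultilinearMap := (Matrix.detRowAlternating (R := ℝ) (n := n)).toMultilinearMap
      cont := hc }
  have hM : HasDerivAt (fun s => (fun i j => M s i j : n → n → ℝ)) (fun i j => (B * M t) i j) t :=
    hasDerivAt_pi.2 fun i => hasDerivAt_pi.2 fun j => h i j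
  have h1 := (f.hasFDerivAt (fun i j => M t i j)).comp_hasDerivAt t hM
  have h2 : f.linearDeriv (fun i j => M t i j) (fun i j => (B * M t) i j)
      = B.trace * (M t).det := by
    rw [ContinuousMultilinearMap.linearDeriv_apply, Matrix.trace, Finset.sum_mul]
    refine Finset.sum_congr rfl fun i _ => ?_
    have := Matrix.det_updateRow_sum (M t) i (B i)
    rw [smul_eq_mul] at this
    rw [Matrix.diag_apply, ← this]
    change Matrix.det _ = _
    congr 1
    unfold Matrix.updateRow
    congr 1
    ext j
    simp [Matrix.mul_apply, Finset.sum_apply]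
  rw [← h2]
  exact h1

lemma aux_clm_det {d : ℕ}
    (A : ℝ → (EuclideanSpace ℝ (Fin d) →L[ℝ] EuclideanSpace ℝ (Fin d)))
    (B : EuclideanSpace ℝ (Fin d) →L[ℝ] EuclideanSpace ℝ (Fin d)) (t : ℝ)
    (h : HasDerivAt A (B.comp (A t)) t) :
    HasDerivAt (fun s => (A s).det)
      (LinearMap.trace ℝ (EuclideanSpace ℝ (Fin d)) B.toLinearMap * (A t).det) t := by
  let b := (EuclideanSpace.basisFun (Fin d) ℝ).toBasis
  have hdet : ∀ L : EuclideanSpace ℝ (Fin d) →L[ℝ] EuclideanSpace ℝ (Fin d),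
      L.det = (LinearMap.toMatrix b b L.toLinearMap).det := fun L =>
    (LinearMap.det_toMatrix b L.toLinearMap).symm
  simp only [hdet]
  rw [LinearMap.trace_eq_matrix_trace ℝ b]
  apply aux_matrix_det (fun s => LinearMap.toMatrix b b (A s).toLinearMap)
  intro i j
  rw [← LinearMap.toMatrix_comp]
  have he : ∀ L : EuclideanSpace ℝ (Fin d) →L[ℝ] EuclideanSpace ℝ (Fin d),
      LinearMap.toMatrix b b L.toLinearMap i j = (L (b j)) i := by
    intro L
    simp [LinearMap.toMatrix_apply, b]
  have h1 : HasDerivAt (fun s => (A s (b j))) ((B.comp (A t)) (b j)) t := by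
    simpa using h.clm_apply (hasDerivAt_const t (b j))
  have h2 := (EuclideanSpace.proj i : EuclideanSpace ℝ (Fin d) →L[ℝ] ℝ).hasFDerivAt.comp_hasDerivAt t h1
  simp only [he]
  have h3 := he (B.comp (A t))
  rw [ContinuousLinearMap.toLinearMap_comp] at h3
  rw [h3]
  exact h2

lemma aux_cs {α : Type*} [MeasurableSpace α] (μ : Measure α) (u v : α → ℝ)
    (hu : MemLp u 2 μ) (hv : MemLp v 2 μ) :
    ∫ x, |u x * v x| ∂μ ≤ Real.sqrt (∫ x, (u x) ^ 2 ∂μ) * Real.sqrt (∫ x, (v x) ^ 2 ∂μ) := by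
  have := integral_mul_norm_le_Lp_mul_Lq (μ := μ) (f := u) (g := v) Real.HolderConjugate.two_two
    (by simpa using hu) (by simpa using hv)
  simpa [abs_mul, Real.sqrt_eq_rpow] using this

/-- Differentiability of the pushed-forward `L²` inner product on a moving domain:
`t ↦ ∫_{Ω₀} u₀ v₀ det DΦ(t,·)` is differentiable with derivative
`∫_{Ω₀} u₀ v₀ (div w)(t, Φ(t,·)) det DΦ(t,·)`, and this derivative is bounded by
`C_w m₂ ‖u₀‖_{L²(Ω₀)} ‖v₀‖_{L²(Ω₀)}`. -/
theorem transport_inner_product_differentiable (d : ℕ) (hd : 1 ≤ d)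
    (T : ℝ) (hT : 0 < T)
    (w : ℝ × EuclideanSpace ℝ (Fin d) → EuclideanSpace ℝ (Fin d))
    (hw : ContDiff ℝ 1 w)
    (Φ : ℝ → EuclideanSpace ℝ (Fin d) → EuclideanSpace ℝ (Fin d))
    (hΦ0 : ∀ x, Φ 0 x = x)
    (hΦ' : ∀ t x, HasDerivAt (fun s => Φ s x) (w (t, Φ t x)) t)
    (DΦ : ℝ → EuclideanSpace ℝ (Fin d) →
      (EuclideanSpace ℝ (Fin d) →L[ℝ] EuclideanSpace ℝ (Fin d)))
    (hDΦ : ∀ t x, HasFDerivAt (Φ t) (DΦ t x) x)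
    (hDΦcont : Continuous (fun p : ℝ × EuclideanSpace ℝ (Fin d) => DΦ p.1 p.2))
    (hDΦ' : ∀ t x, HasDerivAt (fun s => DΦ s x)
      ((fderiv ℝ (fun z => w (t, z)) (Φ t x)).comp (DΦ t x)) t)
    (Cw m₁ m₂ : ℝ) (hCw : 0 ≤ Cw) (hm₁ : 0 < m₁) (hm₁₂ : m₁ ≤ m₂)
    (hdivbdd : ∀ (t : ℝ) (y : EuclideanSpace ℝ (Fin d)),
      |LinearMap.trace ℝ (EuclideanSpace ℝ (Fin d))
        (fderiv ℝ (fun z => w (t, z)) y).toLinearMap| ≤ Cw)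
    (hdet : ∀ t ∈ Set.Icc (0:ℝ) T, ∀ x, m₁ ≤ (DΦ t x).det ∧ (DΦ t x).det ≤ m₂)
    (Ω₀ : Set (EuclideanSpace ℝ (Fin d))) (hΩ₀ : MeasurableSet Ω₀)
    (u₀ v₀ : EuclideanSpace ℝ (Fin d) → ℝ)
    (hu₀ : MemLp u₀ 2 (volume.restrict Ω₀)) (hv₀ : MemLp v₀ 2 (volume.restrict Ω₀)) :
    ∀ t ∈ Set.Icc (0:ℝ) T,
      HasDerivWithinAt (fun s => ∫ x in Ω₀, u₀ x * v₀ x * (DΦ s x).det)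
        (∫ x in Ω₀, u₀ x * v₀ x *
          (LinearMap.trace ℝ (EuclideanSpace ℝ (Fin d))
            (fderiv ℝ (fun z => w (t, z)) (Φ t x)).toLinearMap) * (DΦ t x).det)
        (Set.Icc 0 T) t ∧
      |∫ x in Ω₀, u₀ x * v₀ x *
          (LinearMap.trace ℝ (EuclideanSpace ℝ (Fin d))
            (fderiv ℝ (fun z => w (t, z)) (Φ t x)).toLinearMap) * (DΦ t x).det| ≤
        Cw * m₂ * Real.sqrt (∫ x in Ω₀, (u₀ x) ^ 2) * Real.sqrt (∫ x in Ω₀, (v₀ x) ^ 2) := by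
  have hder : ∀ t x, HasDerivAt (fun s => (DΦ s x).det)
      (LinearMap.trace ℝ (EuclideanSpace ℝ (Fin d))
            (fderiv ℝ (fun z => w (t, z)) (Φ t x)).toLinearMap * (DΦ t x).det) t :=
    fun t x => aux_clm_det (fun s => DΦ s x) _ t (hDΦ' t x)
  have hm₂ : 0 ≤ m₂ := by linarith
  have hbd : ∀ t ∈ Set.Icc (0:ℝ) T, ∀ x, ‖LinearMap.trace ℝ (EuclideanSpace ℝ (Fin d))
            (fderiv ℝ (fun z => w (t, z)) (Φ t x)).toLinearMap * (DΦ t x).det‖ ≤ Cw * m₂ := by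
    intro t ht x
    rw [norm_mul, Real.norm_eq_abs, Real.norm_eq_abs]
    obtain ⟨h1, h2⟩ := hdet t ht x
    rw [abs_of_pos (by linarith : 0 < (DΦ t x).det)]
    exact mul_le_mul (hdivbdd _ _) h2 (by linarith) hCw
  have huv : Integrable (fun x => u₀ x * v₀ x) (volume.restrict Ω₀) := hu₀.integrable_mul hv₀
  have hdc : ∀ s, Continuous (fun x => (DΦ s x).det) := fun s =>
    ContinuousLinearMap.continuous_det.comp
      (hDΦcont.comp (by fun_prop : Continuous fun x : EuclideanSpace ℝ (Fin d) => (s, x)))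
  have hint : ∀ s ∈ Set.Icc (0:ℝ) T,
      Integrable (fun x => u₀ x * v₀ x * (DΦ s x).det) (volume.restrict Ω₀) := by
    intro s hs
    refine huv.mul_bdd (c := m₂) (hdc s).aestronglyMeasurable (ae_of_all _ fun x => ?_)
    obtain ⟨h1, h2⟩ := hdet s hs x
    rw [Real.norm_eq_abs, abs_of_pos (by linarith)]
    exact h2
  intro t ht
  constructor
  · rw [hasDerivWithinAt_iff_tendsto_slope]
    have key : Filter.Tendsto
        (fun s => ∫ x in Ω₀, u₀ x * v₀ x * slope (fun s => (DΦ s x).det) t s)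
        (nhdsWithin t (Set.Icc 0 T \ {t}))
        (nhds (∫ x in Ω₀, u₀ x * v₀ x *
          (LinearMap.trace ℝ (EuclideanSpace ℝ (Fin d))
            (fderiv ℝ (fun z => w (t, z)) (Φ t x)).toLinearMap) * (DΦ t x).det)) := by
      refine tendsto_integral_filter_of_dominated_convergence
        (fun x => |u₀ x * v₀ x| * (Cw * m₂)) ?_ ?_ (huv.abs.mul_const _) ?_
      · refine Filter.Eventually.of_forall fun s => ?_
        refine huv.aestronglyMeasurable.mul ?_
        simp only [slope, vsub_eq_sub]
        exact (((hdc s).sub (hdc t)).const_smul (s - t)⁻¹).aestronglyMeasurable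
      · filter_upwards [self_mem_nhdsWithin] with s hs
        refine ae_of_all _ fun x => ?_
        rw [norm_mul, Real.norm_eq_abs]
        refine mul_le_mul_of_nonneg_left ?_ (abs_nonneg _)
        have := (convex_Icc (0:ℝ) T).norm_image_sub_le_of_norm_hasDerivWithin_le
          (fun r _ => (hder r x).hasDerivWithinAt) (fun r hr => hbd r hr x) ht hs.1
        have hne : 0 < ‖s - t‖ := norm_pos_iff.2 (sub_ne_zero.2 hs.2)
        rw [slope, norm_smul, norm_inv, vsub_eq_sub, inv_mul_le_iff₀ hne, mul_comm]
        exact this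
      · refine ae_of_all _ fun x => ?_
        have := (hasDerivWithinAt_iff_tendsto_slope (s := Set.Icc 0 T)).1
          (hder t x).hasDerivWithinAt
        simp only [mul_assoc (u₀ x * v₀ x)]
        exact this.const_mul _
    refine key.congr' ?_
    filter_upwards [self_mem_nhdsWithin] with s hs
    simp only [slope, vsub_eq_sub, smul_eq_mul]
    rw [← integral_sub (hint s hs.1) (hint t ht), ← integral_const_mul]
    refine integral_congr_ae (ae_of_all _ fun x => ?_)
    ring
  · have h1 := norm_integral_le_of_norm_le (μ := volume.restrict Ω₀)
      (f := fun x => u₀ x * v₀ x *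
          (LinearMap.trace ℝ (EuclideanSpace ℝ (Fin d))
            (fderiv ℝ (fun z => w (t, z)) (Φ t x)).toLinearMap) * (DΦ t x).det)
      (huv.abs.mul_const (Cw * m₂)) (ae_of_all _ fun x => by
        rw [mul_assoc, norm_mul, Real.norm_eq_abs]
        exact mul_le_mul_of_nonneg_left (hbd t ht x) (abs_nonneg _))
    rw [Real.norm_eq_abs] at h1
    refine h1.trans ?_
    rw [integral_mul_const, mul_comm, mul_assoc (Cw * m₂)]
    exact mul_le_mul_of_nonneg_left (aux_cs _ _ _ hu₀ hv₀) (mul_nonneg hCw hm₂)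
end
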